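/- Fix m ≥ 1 and δ > 0. For every behavioral randomized online algorithm A there exists a behavioral randomized online algorithm A' such that sup over all instances I of E(I,A') ≤ (sup over dyadic instances J ∈ ⋃_{k∈ℕ} 𝓘_{2^k} of E(J,A)) + δ. That is, an algorithm that performs well on all instances with dyadic item sizes can be extended, by rounding incoming items down to dyadic values, to an algorithm on all instances whose worst-case expected payoff increases by at most δ. -/

import Mathlib

/-!
Round every incoming item down to a dyadic value with relative error at most `δ / m`, and let `A`
decide on the rounded sizes. The decisions have the same distribution as those of `A` on the rounded
instance, so only the loads differ: each bin loses at most the total rounding error, which is at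
most `δ / m` times the total size `≤ m` of the items. Because the error is relative, this bound does
not depend on the number of items, and rounded sizes stay positive. Such a rounding exists for any
set of sizes dense in the unit interval; the dyadic numbers are such a set, and finitely many of
them always have a common denominator `2 ^ k`.
-/

open scoped BigOperators

namespace BinStretch

def Fits (m : ℕ) (I : List ℝ) : Prop :=
  ∃ σ : Fin I.length → Fin m,
    ∀ b : Fin m, ∑ i ∈ Finset.univ.filter fun i => σ i = b, I.get i ≤ 1

def IsInstance (m : ℕ) (I : List ℝ) : Prop :=
  (∀ a ∈ I, 0 < a ∧ a ≤ 1) ∧ Fits m I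

noncomputable def payoff (m : ℕ) (I : List ℝ) (D : Fin I.length → Fin m) : ℝ :=
  ⨆ b : Fin m, ∑ i ∈ Finset.univ.filter fun i => D i = b, I.get i

noncomputable def prob {m : ℕ} (A : List ℝ → PMF (Fin m)) (I : List ℝ)
    (D : Fin I.length → Fin m) : ℝ :=
  ∏ i : Fin I.length, ((A (I.take (i.1 + 1))) (D i)).toReal

noncomputable def expPayoff (m : ℕ) (A : List ℝ → PMF (Fin m)) (I : List ℝ) : ℝ :=
  ∑ D : Fin I.length → Fin m, prob A I D * payoff m I D

def detRun {m : ℕ} (A : List ℝ → Fin m) (I : List ℝ) : Fin I.length → Fin m :=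
  fun i => A (I.take (i.1 + 1))

end BinStretch

namespace BinStretch

/-- Instances all of whose item sizes are integer multiples of `1/g`. -/
def InstanceG (m g : ℕ) (I : List ℝ) : Prop :=
  IsInstance m I ∧ ∀ a ∈ I, ∃ x : ℕ, a = (x : ℝ) / g

end BinStretch

namespace BinStretch

section Load

variable {ι κ β : Type*} [Fintype ι] [Fintype κ] [DecidableEq β]

/-- The load of bin `b` when item `i`, of size `w i`, is put into bin `D i`. Items
are indexed by an arbitrary finite type, so that a list and its rounding can share their indices. -/
def load (w : ι → ℝ) (D : ι → β) (b : β) : ℝ :=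
  ∑ i with D i = b, w i

lemma load_comp_equiv (e : κ ≃ ι) (w : ι → ℝ) (D : ι → β) (b : β) :
    load (w ∘ e) (D ∘ e) b = load w D b :=
  Finset.sum_equiv e (by simp) fun _ _ => rfl

lemma load_mono {v w : ι → ℝ} (h : v ≤ w) (D : ι → β) (b : β) : load v D b ≤ load w D b :=
  Finset.sum_le_sum fun i _ => h i

lemma load_le_sum {w : ι → ℝ} (hw : 0 ≤ w) (D : ι → β) (b : β) : load w D b ≤ ∑ i, w i :=
  Finset.sum_le_univ_sum_of_nonneg hw

lemma sum_load [Fintype β] (w : ι → ℝ) (D : ι → β) : ∑ b, load w D b = ∑ i, w i :=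
  Finset.sum_fiberwise _ _ _

lemma load_add_load_sub (v w : ι → ℝ) (D : ι → β) (b : β) :
    load v D b + load (w - v) D b = load w D b := by
  simp only [load, Pi.sub_apply, ← Finset.sum_add_distrib, add_sub_cancel]

lemma iSup_load_le_iSup_load_add_sum_sub [Finite β] {v w : ι → ℝ} (h : v ≤ w) (D : ι → β) :
    ⨆ b, load w D b ≤ (⨆ b, load v D b) + ∑ i, (w i - v i) := by
  cases isEmpty_or_nonempty β
  · simpa only [Real.iSup_of_isEmpty, zero_add] using
      Finset.sum_nonneg fun i _ => sub_nonneg.2 (h i)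
  refine ciSup_le fun b => ?_
  rw [← load_add_load_sub v w]
  exact add_le_add (le_ciSup (Set.finite_range (load v D)).bddAbove b)
    (load_le_sum (sub_nonneg.2 h) D b)

end Load

section Instance

variable {m : ℕ} {I : List ℝ}

lemma Fits.sum_le (h : Fits m I) : I.sum ≤ m := by
  obtain ⟨σ, hσ⟩ := h
  calc I.sum = ∑ i, I.get i := (Fin.sum_univ_getElem I).symm
    _ = ∑ b : Fin m, load I.get σ b := (sum_load I.get σ).symm
    _ ≤ ∑ _b : Fin m, (1 : ℝ) := Finset.sum_le_sum fun b _ => hσ b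
    _ = m := by simp

lemma load_map {β : Type*} [DecidableEq β] (r : ℝ → ℝ) (D : Fin I.length → β) (b : β) :
    load (I.map r).get (D ∘ Fin.cast (List.length_map r)) b = load (r ∘ I.get) D b := by
  have get_map : (I.map r).get = (r ∘ I.get) ∘ finCongr (List.length_map r) := by
    ext i
    simp
  rw [get_map]
  exact load_comp_equiv (finCongr (List.length_map r)) (r ∘ I.get) D b

lemma Fits.map {r : ℝ → ℝ} (h : Fits m I) (hr : ∀ a ∈ I, r a ≤ a) : Fits m (I.map r) := by
  obtain ⟨σ, hσ⟩ := h
  refine ⟨σ ∘ Fin.cast (List.length_map r), fun b => ?_⟩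
  calc load (I.map r).get (σ ∘ Fin.cast (List.length_map r)) b
      = load (r ∘ I.get) σ b := load_map r σ b
    _ ≤ load I.get σ b := load_mono (fun i => hr _ (I.get_mem i)) σ b
    _ ≤ 1 := hσ b

lemma IsInstance.map {r : ℝ → ℝ} (h : IsInstance m I) (hr : ∀ a ∈ I, 0 < r a ∧ r a ≤ a) :
    IsInstance m (I.map r) := by
  refine ⟨List.forall_mem_map.2 fun a ha => ?_, h.2.map fun a ha => (hr a ha).2⟩
  exact ⟨(hr a ha).1, (hr a ha).2.trans (h.1 a ha).2⟩

lemma isInstance_nil : IsInstance m [] :=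
  ⟨by simp, fun i => i.elim0, by simp⟩

lemma IsInstance.payoff_le (h : IsInstance m I) (D : Fin I.length → Fin m) : payoff m I D ≤ m := by
  refine Real.iSup_le (fun b => ?_) m.cast_nonneg
  calc load I.get D b ≤ ∑ i, I.get i := load_le_sum (fun i => (h.1 _ (I.get_mem i)).1.le) D b
    _ = I.sum := Fin.sum_univ_getElem I
    _ ≤ m := h.2.sum_le

end Instance

section Expectation

variable {m : ℕ} (A : List ℝ → PMF (Fin m)) {I : List ℝ}

lemma prob_nonneg (D : Fin I.length → Fin m) : 0 ≤ prob A I D :=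
  Finset.prod_nonneg fun _ _ => ENNReal.toReal_nonneg

lemma sum_toReal_pmf {β : Type*} [Fintype β] (p : PMF β) : ∑ b, (p b).toReal = 1 := by
  rw [← ENNReal.toReal_sum fun b _ => p.apply_ne_top b, ← tsum_fintype (L := .unconditional _),
    p.tsum_coe, ENNReal.toReal_one]

lemma sum_prod_toReal_pmf {ι β : Type*} [Fintype ι] [DecidableEq ι] [Fintype β] (p : ι → PMF β) :
    ∑ D : ι → β, ∏ i, (p i (D i)).toReal = 1 := by
  rw [← Fintype.prod_sum fun i b => (p i b).toReal]
  simp only [sum_toReal_pmf, Finset.prod_const_one]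

lemma sum_prob (I : List ℝ) : ∑ D, prob A I D = 1 :=
  sum_prod_toReal_pmf fun i : Fin I.length => A (I.take (i.1 + 1))

lemma IsInstance.expPayoff_le (h : IsInstance m I) : expPayoff m A I ≤ m :=
  calc expPayoff m A I ≤ ∑ D, prob A I D * m :=
        Finset.sum_le_sum fun D _ => mul_le_mul_of_nonneg_left (h.payoff_le D) (prob_nonneg A D)
    _ = m := by rw [← Finset.sum_mul, sum_prob, one_mul]

lemma prob_map (r : ℝ → ℝ) (D : Fin I.length → Fin m) :
    prob A (I.map r) (D ∘ Fin.cast (List.length_map r)) = prob (A ∘ List.map r) I D :=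
  Fintype.prod_equiv (finCongr (List.length_map r)) _ _ fun i => by simp [List.map_take]

lemma expPayoff_map (r : ℝ → ℝ) (I : List ℝ) :
    expPayoff m A (I.map r) =
      ∑ D, prob (A ∘ List.map r) I D * ⨆ b, load (r ∘ I.get) D b := by
  symm
  refine Fintype.sum_equiv
    ((finCongr (List.length_map r)).symm.arrowCongr (Equiv.refl _)) _ _ fun D => ?_
  simp only [← prob_map, ← load_map]
  rfl

lemma expPayoff_comp_map_le {r : ℝ → ℝ} (hr : ∀ a ∈ I, r a ≤ a) :
    expPayoff m (A ∘ List.map r) I ≤ expPayoff m A (I.map r) + (I.map fun a => a - r a).sum := by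
  have payoff_le (D : Fin I.length → Fin m) :
      payoff m I D ≤ (⨆ b, load (r ∘ I.get) D b) + (I.map fun a => a - r a).sum := by
    rw [← Fin.sum_univ_fun_getElem]
    exact iSup_load_le_iSup_load_add_sum_sub (fun i => hr _ (I.get_mem i)) D
  calc expPayoff m (A ∘ List.map r) I
      ≤ ∑ D, prob (A ∘ List.map r) I D *
          ((⨆ b, load (r ∘ I.get) D b) + (I.map fun a => a - r a).sum) :=
        Finset.sum_le_sum fun D _ => mul_le_mul_of_nonneg_left (payoff_le D) (prob_nonneg _ D)
    _ = expPayoff m A (I.map r) + (I.map fun a => a - r a).sum := by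
        simp only [mul_add, Finset.sum_add_distrib, ← Finset.sum_mul, sum_prob, one_mul,
          expPayoff_map]

end Expectation

section Rounding

lemma exists_rounding_down {S : Set ℝ} (hS : Set.Ioo 0 1 ⊆ closure S) {ε : ℝ} (hε : 0 < ε) :
    ∃ r : ℝ → ℝ, ∀ a ∈ Set.Ioc 0 1, r a ∈ S ∧ 0 < r a ∧ r a ≤ a ∧ a - r a ≤ ε * a := by
  have exists_lower (a : ℝ) (ha : a ∈ Set.Ioc 0 1) :
      ∃ x, x ∈ S ∧ 0 < x ∧ x ≤ a ∧ a - x ≤ ε * a := by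
    have hlt : max 0 (a - ε * a) < a := max_lt ha.1 (sub_lt_self a (mul_pos hε ha.1))
    obtain ⟨y, hy⟩ := exists_between hlt
    have hyS : y ∈ closure S := hS ⟨(le_max_left _ _).trans_lt hy.1, hy.2.trans_le ha.2⟩
    obtain ⟨x, hx, hxS⟩ := mem_closure_iff.1 hyS _ isOpen_Ioo hy
    obtain ⟨hx0, hxa⟩ := max_lt_iff.1 hx.1
    exact ⟨x, hxS, hx0, hx.2.le, (sub_lt_comm.1 hxa).le⟩
  choose! r hr using exists_lower
  exact ⟨r, hr⟩

lemma exists_algorithm_forall_expPayoff_le_add {m : ℕ} {δ : ℝ} (hδ : 0 < δ) {S : Set ℝ}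
    (hS : Set.Ioo 0 1 ⊆ closure S) (A : List ℝ → PMF (Fin m)) :
    ∃ A' : List ℝ → PMF (Fin m), ∀ I, IsInstance m I →
      ∃ J, (IsInstance m J ∧ ∀ a ∈ J, a ∈ S) ∧ expPayoff m A' I ≤ expPayoff m A J + δ := by
  have hm : (0 : ℝ) < m := Nat.cast_pos.2 (Fin.pos (A []).support_nonempty.some)
  obtain ⟨r, hr⟩ := exists_rounding_down hS (div_pos hδ hm)
  refine ⟨A ∘ List.map r, fun I hI => ?_⟩
  replace hr (a : ℝ) (ha : a ∈ I) := hr a (hI.1 a ha)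
  have error_le : (I.map fun a => a - r a).sum ≤ δ :=
    calc (I.map fun a => a - r a).sum ≤ (I.map fun a => δ / m * a).sum :=
          List.sum_le_sum fun a ha => (hr a ha).2.2.2
      _ = δ / m * I.sum := by rw [List.sum_map_mul_left, List.map_id']
      _ ≤ δ / m * m := by gcongr; exact hI.2.sum_le
      _ = δ := div_mul_cancel₀ δ hm.ne'
  refine ⟨I.map r, ⟨hI.map fun a ha => ⟨(hr a ha).2.1, (hr a ha).2.2.1⟩,
    List.forall_mem_map.2 fun a ha => (hr a ha).1⟩, ?_⟩
  exact (expPayoff_comp_map_le A fun a ha => (hr a ha).2.2.1).trans (by gcongr)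

end Rounding

section AdicFractions

/-- The nonnegative `b`-adic fractions; `b = 2` gives the dyadic item sizes. -/
def adicFractions (b : ℕ) : Set ℝ :=
  {a | ∃ k x : ℕ, a = (x : ℝ) / (b ^ k : ℕ)}

lemma Ici_subset_closure_adicFractions {b : ℕ} (hb : 1 < b) :
    Set.Ici 0 ⊆ closure (adicFractions b) := fun a ha => by
  have hpow : Filter.Tendsto (fun k : ℕ => ((b ^ k : ℕ) : ℝ)) Filter.atTop Filter.atTop :=
    tendsto_natCast_atTop_atTop.comp (tendsto_pow_atTop_atTop_of_one_lt hb)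
  exact mem_closure_of_tendsto ((tendsto_nat_floor_mul_div_atTop ha).comp hpow)
    (.of_forall fun k => ⟨k, _, rfl⟩)

lemma exists_eq_div_pow_of_le {b k l : ℕ} (hb : b ≠ 0) (hkl : k ≤ l) (x : ℕ) :
    ∃ y : ℕ, (x : ℝ) / (b ^ k : ℕ) = y / (b ^ l : ℕ) := by
  obtain ⟨j, rfl⟩ := Nat.exists_eq_add_of_le hkl
  refine ⟨x * b ^ j, ?_⟩
  push_cast
  rw [pow_add, mul_div_mul_right _ _ (by positivity)]

lemma exists_instanceG_pow_iff {b : ℕ} (hb : b ≠ 0) {m : ℕ} {J : List ℝ} :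
    (∃ k, InstanceG m (b ^ k) J) ↔ IsInstance m J ∧ ∀ a ∈ J, a ∈ adicFractions b := by
  refine ⟨fun ⟨k, hJ, hk⟩ => ⟨hJ, fun a ha => ⟨k, hk a ha⟩⟩, fun ⟨hJ, hS⟩ => ?_⟩
  have common_denominator :
      ∀ᶠ k in Filter.atTop, ∀ a ∈ J, ∃ x : ℕ, a = (x : ℝ) / (b ^ k : ℕ) := by
    refine (Filter.eventually_all_finite J.finite_toSet).2 fun a ha => ?_
    obtain ⟨k, x, rfl⟩ := hS a ha
    exact (Filter.eventually_ge_atTop k).mono fun l hkl => exists_eq_div_pow_of_le hb hkl x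
  exact common_denominator.exists.imp fun k hk => ⟨hJ, hk⟩

lemma iSup_instanceG_pow {b : ℕ} (hb : b ≠ 0) {m : ℕ} (f : List ℝ → ℝ) :
    ⨆ J : {J : List ℝ // ∃ k, InstanceG m (b ^ k) J}, f J.1 =
      ⨆ J : {J : List ℝ // IsInstance m J ∧ ∀ a ∈ J, a ∈ adicFractions b}, f J.1 :=
  (Equiv.subtypeEquivRight fun _ => exists_instanceG_pow_iff hb).iSup_congr fun _ => rfl

end AdicFractions

end BinStretch

theorem extend_dyadic_algorithm_general {m : ℕ} {δ : ℝ} (hδ : 0 < δ) {S : Set ℝ}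
    (hS : Set.Ioo 0 1 ⊆ closure S) (A : List ℝ → PMF (Fin m)) :
    ∃ A' : List ℝ → PMF (Fin m),
      (⨆ I : {I : List ℝ // BinStretch.IsInstance m I}, BinStretch.expPayoff m A' I.1) ≤
      (⨆ J : {J : List ℝ // BinStretch.IsInstance m J ∧ ∀ a ∈ J, a ∈ S},
        BinStretch.expPayoff m A J.1) + δ := by
  obtain ⟨A', hA'⟩ := BinStretch.exists_algorithm_forall_expPayoff_le_add hδ hS A
  have : Nonempty {I : List ℝ // BinStretch.IsInstance m I} := ⟨⟨[], BinStretch.isInstance_nil⟩⟩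
  have hbdd : BddAbove (Set.range fun J : {J : List ℝ // BinStretch.IsInstance m J ∧
      ∀ a ∈ J, a ∈ S} => BinStretch.expPayoff m A J.1) :=
    ⟨m, Set.forall_mem_range.2 fun J => J.2.1.expPayoff_le A⟩
  refine ⟨A', ciSup_le fun I => ?_⟩
  obtain ⟨J, hJ, hIJ⟩ := hA' I.1 I.2
  exact hIJ.trans (add_le_add_left (le_ciSup hbdd ⟨J, hJ⟩) δ)

theorem extend_dyadic_algorithm (m : ℕ) (hm : 1 ≤ m) (δ : ℝ) (hδ : 0 < δ)
    (A : List ℝ → PMF (Fin m)) :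
    ∃ A' : List ℝ → PMF (Fin m),
      (⨆ I : {I : List ℝ // BinStretch.IsInstance m I}, BinStretch.expPayoff m A' I.1) ≤
      (⨆ J : {J : List ℝ // ∃ k : ℕ, BinStretch.InstanceG m (2 ^ k) J},
        BinStretch.expPayoff m A J.1) + δ := by
  rw [BinStretch.iSup_instanceG_pow two_ne_zero]
  exact extend_dyadic_algorithm_general hδ ((Set.Ioo_subset_Ioi_self.trans
    Set.Ioi_subset_Ici_self).trans (BinStretch.Ici_subset_closure_adicFractions one_lt_two)) A
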